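/- arXiv:math/9603216 — 2 statements merged into one kernel-verified Lean document; each statement's English description precedes it below -/
import Mathlib

section
/- For n ≥ 1 define the polynomial function B_n : ℝ → ℝ by B_n(y) := Σ_{j=1}^n 2·(−1)^{j+1}·C(n+j−1, n−j)·((2j−1)!/((j−1)!·(j+1)!))·y^j. Then B_n satisfies the ordinary differential equation y²·(1−y)·B_n''(y) + y·(1−y)·B_n'(y) + (n²·y − 1)·B_n(y) = 0 for all y ∈ ℝ. -/
/-!
With the Euler operator `θ = y d/dy`, the equation reads `(θ² - 1) B_n = y (θ² - n²) B_n`. As `θ`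
multiplies `y ^ j` by `j`, this is the two-term recurrence
`((j + 1)² - 1) a(n, j + 1) = (j² - n²) a(n, j)` between consecutive coefficients, which is read off
the closed form `a(n, j) = 2 (-1)^(j + 1) (n + j - 1)! / ((n - j)! (j - 1)! (j + 1)!)`. At both ends
of the range `1 ≤ j ≤ n`, beyond which the coefficients are zero, the recurrence persists because
the factors `1² - 1` and `n² - n²` vanish.
-/

open Finset

/-- The polynomial function
`B_n(y) = ∑_{j=1}^n 2(-1)^{j+1} C(n+j-1, n-j) (2j-1)!/((j-1)!(j+1)!) y^j`. -/
noncomputable def koebeB (n : ℕ) (y : ℝ) : ℝ :=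
  ∑ j ∈ Icc 1 n, 2 * (-1 : ℝ) ^ (j + 1) * (Nat.choose (n + j - 1) (n - j)) *
    ((Nat.factorial (2 * j - 1) : ℝ) /
      ((Nat.factorial (j - 1) : ℝ) * (Nat.factorial (j + 1) : ℝ))) * y ^ j

open Polynomial
open scoped Nat

/-- The Euler operator `θ = X d/dX` on polynomials, which turns `X ^ j` into `j * X ^ j`. -/
noncomputable def eulerOperator {R : Type*} [Semiring R] (p : R[X]) : R[X] :=
  X * derivative p

theorem coeff_eulerOperator {R : Type*} [Semiring R] (p : R[X]) (j : ℕ) :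
    (eulerOperator p).coeff j = p.coeff j * j := by
  cases j with
  | zero => simp [eulerOperator]
  | succ j => simp [eulerOperator, coeff_derivative]

theorem eulerOperator_eulerOperator {R : Type*} [CommSemiring R] (p : R[X]) :
    eulerOperator (eulerOperator p) = X ^ 2 * derivative (derivative p) + X * derivative p := by
  simp only [eulerOperator, derivative_mul, derivative_X]
  ring

theorem eulerOperator_ode_iff_coeff_recurrence {R : Type*} [CommRing R] (a b : R) (p : R[X]) :
    (1 - X) * eulerOperator (eulerOperator p) + (C a * X - C b) * p = 0 ↔
      b * p.coeff 0 = 0 ∧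
        ∀ j : ℕ, (((j + 1 : ℕ) : R) ^ 2 - b) * p.coeff (j + 1) = ((j : R) ^ 2 - a) * p.coeff j := by
  have coeff_zero : ((1 - X) * eulerOperator (eulerOperator p) + (C a * X - C b) * p).coeff 0 =
      -(b * p.coeff 0) := by
    simp [sub_mul, mul_assoc, coeff_eulerOperator]
  have coeff_succ (j : ℕ) :
      ((1 - X) * eulerOperator (eulerOperator p) + (C a * X - C b) * p).coeff (j + 1) =
        (((j + 1 : ℕ) : R) ^ 2 - b) * p.coeff (j + 1) - ((j : R) ^ 2 - a) * p.coeff j := by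
    simp only [sub_mul, one_mul, mul_assoc, coeff_add, coeff_sub, coeff_C_mul, coeff_X_mul,
      coeff_eulerOperator]
    ring
  rw [Polynomial.ext_iff, ← Nat.and_forall_add_one]
  simp only [coeff_zero, coeff_succ, Polynomial.coeff_zero, neg_eq_zero, sub_eq_zero]

/-- The coefficient `a(n, j)` of `y ^ j` in `koebeB n`, meaningful for `1 ≤ j ≤ n` only: outside
this range the truncated subtractions make the formula produce spurious values. -/
noncomputable def koebeCoeff (n j : ℕ) : ℝ :=
  2 * (-1) ^ (j + 1) * (n + j - 1).choose (n - j) * ((2 * j - 1)! / ((j - 1)! * (j + 1)!))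

theorem koebeCoeff_eq_factorial_div {n j : ℕ} (hj : 1 ≤ j) (hjn : j ≤ n) :
    koebeCoeff n j =
      2 * (-1) ^ (j + 1) * ((n + j - 1)! / ((n - j)! * (j - 1)! * (j + 1)!)) := by
  have choose_eq : ((n + j - 1).choose (n - j) : ℝ) = (n + j - 1)! / ((n - j)! * (2 * j - 1)!) := by
    rw [Nat.cast_choose ℝ (by lia), show n + j - 1 - (n - j) = 2 * j - 1 by lia]
  rw [koebeCoeff, choose_eq]
  field_simp

theorem koebeCoeff_recurrence {n j : ℕ} (hj : 1 ≤ j) (hjn : j < n) :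
    (((j + 1 : ℕ) : ℝ) ^ 2 - 1) * koebeCoeff n (j + 1) =
      ((j : ℝ) ^ 2 - (n : ℝ) ^ 2) * koebeCoeff n j := by
  rw [koebeCoeff_eq_factorial_div (j := j + 1) (by lia) hjn, koebeCoeff_eq_factorial_div hj hjn.le]
  obtain ⟨i, rfl⟩ : ∃ i, j = i + 1 := Nat.exists_eq_add_of_le' hj
  obtain ⟨k, rfl⟩ : ∃ k, n = k + (i + 2) := Nat.exists_eq_add_of_le' hjn
  rw [show k + (i + 2) + (i + 1 + 1) - 1 = k + 2 * i + 2 + 1 by lia,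
    show k + (i + 2) + (i + 1) - 1 = k + 2 * i + 2 by lia,
    show k + (i + 2) - (i + 1 + 1) = k by lia,
    show k + (i + 2) - (i + 1) = k + 1 by lia]
  simp only [Nat.add_sub_cancel, Nat.factorial_succ]
  push_cast
  field_simp
  ring

/-- The polynomial whose evaluation is `koebeB n`. -/
noncomputable def koebePolynomial (n : ℕ) : ℝ[X] :=
  ∑ j ∈ Icc 1 n, monomial j (koebeCoeff n j)

theorem koebeB_eq_eval_koebePolynomial (n : ℕ) :
    koebeB n = fun y ↦ (koebePolynomial n).eval y := by
  funext y
  simp only [koebeB, koebePolynomial, koebeCoeff, eval_finsetSum, eval_monomial]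

theorem coeff_koebePolynomial (n j : ℕ) :
    (koebePolynomial n).coeff j = if j ∈ Icc 1 n then koebeCoeff n j else 0 := by
  simp only [koebePolynomial, finsetSum_coeff, coeff_monomial, sum_ite_eq']

theorem coeff_koebePolynomial_recurrence (n j : ℕ) :
    (((j + 1 : ℕ) : ℝ) ^ 2 - 1) * (koebePolynomial n).coeff (j + 1) =
      ((j : ℝ) ^ 2 - (n : ℝ) ^ 2) * (koebePolynomial n).coeff j := by
  rcases Nat.eq_zero_or_pos j with rfl | hj
  · simp [coeff_koebePolynomial]
  rcases lt_trichotomy j n with hjn | rfl | hnj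
  · simpa [coeff_koebePolynomial, Nat.one_le_iff_ne_zero, hj.ne', hjn.le, Nat.succ_le_of_lt hjn]
      using koebeCoeff_recurrence hj hjn
  · simp [coeff_koebePolynomial]
  · simp [coeff_koebePolynomial, hnj.not_ge, (hnj.trans j.lt_succ_self).not_ge]

theorem koebePolynomial_ode (n : ℕ) :
    (1 - X) * eulerOperator (eulerOperator (koebePolynomial n)) +
      (C ((n : ℝ) ^ 2) * X - C 1) * koebePolynomial n = 0 :=
  (eulerOperator_ode_iff_coeff_recurrence _ _ _).mpr
    ⟨by simp [coeff_koebePolynomial], coeff_koebePolynomial_recurrence n⟩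

/-- For `n ≥ 1`, `B_n` satisfies the ordinary differential equation
`y²(1-y)B_n'' + y(1-y)B_n' + (n²y - 1)B_n = 0`. -/
theorem koebeB_ode (n : ℕ) (hn : 1 ≤ n) (y : ℝ) :
    y ^ 2 * (1 - y) * deriv (deriv (koebeB n)) y +
      y * (1 - y) * deriv (koebeB n) y + ((n : ℝ) ^ 2 * y - 1) * koebeB n y = 0 := by
  have deriv_eval (p : ℝ[X]) : deriv (fun x ↦ p.eval x) = fun x ↦ (derivative p).eval x :=
    funext fun _ ↦ p.deriv
  have ode_at_y := congrArg (eval y) (koebePolynomial_ode n)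
  simp only [eulerOperator_eulerOperator, eval_add, eval_sub, eval_mul, eval_pow, eval_X, eval_C,
    eval_one, eval_zero] at ode_at_y
  simp only [koebeB_eq_eval_koebePolynomial, deriv_eval]
  linear_combination ode_at_y
end

section
/- (de Branges' inequality.) Let n ≥ 1 and let τ_1, …, τ_{n+1} be a de Branges system of index n. Then for every k with 1 ≤ k ≤ n+1 and every t ≥ 0, one has τ_k(t) ≥ 0. -/
/-- A de Branges system of index `n`: differentiable functions `τ k : ℝ → ℝ`
(`k = 1, …, n+1`) with `τ (n+1) ≡ 0`, `τ k 0 = n+1-k`, and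
`τ_{k+1}(t) - τ_k(t) = τ̇_k(t)/k + τ̇_{k+1}(t)/(k+1)` for `k = 1, …, n`. -/
structure IsDeBrangesSystem (n : ℕ) (τ : ℕ → ℝ → ℝ) : Prop where
  differentiable : ∀ k : ℕ, 1 ≤ k → k ≤ n + 1 → Differentiable ℝ (τ k)
  top_eq_zero : ∀ t : ℝ, τ (n + 1) t = 0
  initial : ∀ k : ℕ, 1 ≤ k → k ≤ n + 1 → τ k 0 = (n : ℝ) + 1 - (k : ℝ)
  system : ∀ k : ℕ, 1 ≤ k → k ≤ n → ∀ t : ℝ,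
    τ (k + 1) t - τ k t = deriv (τ k) t / (k : ℝ) + deriv (τ (k + 1)) t / ((k : ℝ) + 1)

/-!
With `S_n` the rescaled Chebyshev polynomial, `S_n (2 cos θ) = sin ((n + 1) θ) / sin θ`, let
`Λ_k (x)` be the `k`-th Fourier coefficient of `φ ↦ S_n (2 (1 - x + x cos φ))`. The chain rule in
`x` and `φ` gives `x (d/dx) (Λ_k + Λ_{k+1}) = k Λ_k - (k + 1) Λ_{k+1}`, so the tail sums
`∑_{j=k}^n (Λ_j + Λ_{j+1}) (e⁻ᵗ)` have derivative `-k Λ_k (e⁻ᵗ)` and solve the de Branges system,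
whose solution is unique.

It remains to see that `Λ_k ≥ 0` on `[0, 1]`. Since `S_n` is the character of the `n`-th symmetric
power of `SL₂`, the function above is the trace of `Symⁿ (D⁻¹ Q D Qᵀ)`, where `Q` is the rotation
with `cos² = 1 - x` and `D = diag (e^{iφ}, 1)`. In the monomial basis `Symⁿ D` is diagonal and
`Symⁿ (Qᵀ)` is the transpose of `Symⁿ Q` conjugated by positive binomial weights, so every Fourier
coefficient of the trace is a positive combination of squares.
-/

open Polynomial Finset
open LaurentPolynomial hiding C

section SymmetricPower

variable {R : Type*} [CommRing R]

/-- The binary form `(a X + b Y) ^ i * (c X + d Y) ^ (n - i)` at `Y = 1`, for `M = !![a, b; c, d]`: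
the image of the monomial `X ^ i * Y ^ (n - i)` under the linear substitution `M`. -/
noncomputable def symPowRow (M : Matrix (Fin 2) (Fin 2) R) (n i : ℕ) : R[X] :=
  (C (M 0 0) * X + C (M 0 1)) ^ i * (C (M 1 0) * X + C (M 1 1)) ^ (n - i)

/-- The `n`-th symmetric power of a `2 × 2` matrix, in the monomial basis `X ^ i * Y ^ (n - i)` of
binary forms of degree `n`. -/
noncomputable def symPow (M : Matrix (Fin 2) (Fin 2) R) (n : ℕ) :
    Matrix (Fin (n + 1)) (Fin (n + 1)) R :=
  Matrix.of fun i j ↦ (symPowRow M n i).coeff j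

lemma homogenize_symPowRow (M : Matrix (Fin 2) (Fin 2) R) {n i : ℕ} (hi : i ≤ n) :
    (symPowRow M n i).homogenize n =
      (MvPolynomial.C (M 0 0) * .X 0 + MvPolynomial.C (M 0 1) * .X 1) ^ i *
        (MvPolynomial.C (M 1 0) * .X 0 + MvPolynomial.C (M 1 1) * .X 1) ^ (n - i) := by
  have linear (a b : R) : MvPolynomial.IsHomogeneous
      (MvPolynomial.C a * .X 0 + MvPolynomial.C b * .X 1 : MvPolynomial (Fin 2) R) 1 :=
    (MvPolynomial.isHomogeneous_C_mul_X _ _).add (MvPolynomial.isHomogeneous_C_mul_X _ _)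
  refine homogenize_eq_of_isHomogeneous ?_ (by simp [symPowRow])
  simpa [Nat.add_sub_cancel' hi] using ((linear _ _).pow i).mul ((linear _ _).pow (n - i))

lemma sum_coeff_symPowRow_smul {A : Type*} [CommRing A] [Algebra R A]
    (M : Matrix (Fin 2) (Fin 2) R) {n i : ℕ} (hi : i ≤ n) (u v : A) :
    ∑ j : Fin (n + 1), (symPowRow M n i).coeff j • (u ^ (j : ℕ) * v ^ (n - j)) =
      (M 0 0 • u + M 0 1 • v) ^ i * (M 1 0 • u + M 1 1 • v) ^ (n - i) := by
  have h := congrArg (MvPolynomial.aeval ![u, v]) (homogenize_symPowRow M hi)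
  simp only [homogenize, Nat.sum_antidiagonal_eq_sum_range_succ_mk, sum_range, map_sum,
    MvPolynomial.aeval_monomial] at h
  simpa [Finsupp.prod_fintype, ← Algebra.smul_def] using h

theorem symPow_mul (M N : Matrix (Fin 2) (Fin 2) R) (n : ℕ) :
    symPow (M * N) n = symPow M n * symPow N n := by
  ext i k
  have h := congrArg (coeff · k) <| sum_coeff_symPowRow_smul M (Nat.le_of_lt_succ i.2)
    (C (N 0 0) * X + C (N 0 1)) (C (N 1 0) * X + C (N 1 1))
  simp only [finsetSum_coeff, coeff_smul, smul_eq_mul] at h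
  simp only [symPow, Matrix.mul_apply, Matrix.of_apply, symPowRow, Fin.sum_univ_two] at h ⊢
  rw [h]
  congr 3 <;> simp [Polynomial.smul_eq_C_mul] <;> ring

lemma symPow_map {S : Type*} [CommRing S] (f : R →+* S) (M : Matrix (Fin 2) (Fin 2) R) (n : ℕ) :
    symPow (M.map f) n = (symPow M n).map f := by
  ext i j
  simp [symPow, symPowRow, ← coeff_map]

lemma symPow_diagonal (u : R) (n : ℕ) :
    symPow (Matrix.diagonal ![u, 1]) n = Matrix.diagonal fun i : Fin (n + 1) ↦ u ^ (i : ℕ) := by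
  ext i j
  have row_eq : symPowRow (Matrix.diagonal ![u, 1]) n i = C (u ^ (i : ℕ)) * X ^ (i : ℕ) := by
    simp [symPowRow, mul_pow]
  simp [symPow, row_eq, -map_pow, coeff_X_pow, Matrix.diagonal_apply, Fin.ext_iff, eq_comm]

lemma coeff_coeff_bivariateSwap (p : R[X][X]) (i j : ℕ) :
    ((Bivariate.swap p).coeff i).coeff j = (p.coeff j).coeff i := by
  induction p using Polynomial.induction_on' with
  | add p q hp hq => simp only [map_add, coeff_add, hp, hq]
  | monomial n f =>
    induction f using Polynomial.induction_on' with
    | add p q hp hq => simp only [map_add, coeff_add, hp, hq]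
    | monomial m r =>
      simp only [Bivariate.swap_monomial_monomial, coeff_monomial]
      split_ifs <;> simp_all [coeff_monomial]

lemma coeff_linear_pow (a b : R) (n i : ℕ) :
    ((C a * X + C b) ^ n).coeff i = a ^ i * b ^ (n - i) * n.choose i := by
  have h : (C a * X + C b) ^ n = ((X + C b) ^ n).comp (C a * X) := by simp
  rw [h, comp_C_mul_X_coeff, coeff_X_add_C_pow]
  ring

-- Both sides are coefficients of `(a X Y + b Y + c X + d) ^ n`, and transposing swaps `X` and `Y`.
theorem choose_mul_symPow_transpose (M : Matrix (Fin 2) (Fin 2) R) (n : ℕ) (i j : Fin (n + 1)) :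
    n.choose i * symPow M.transpose n i j = n.choose j * symPow M n j i := by
  let form (M : Matrix (Fin 2) (Fin 2) R) : R[X][X] :=
    C (C (M 0 0) * X + C (M 0 1)) * X + C (C (M 1 0) * X + C (M 1 1))
  have coeff_form (M : Matrix (Fin 2) (Fin 2) R) (i j : Fin (n + 1)) :
      ((form M ^ n).coeff i).coeff j = n.choose i * symPow M n i j := by
    rw [coeff_linear_pow, coeff_mul_natCast, mul_comm]
    rfl
  have swap_form : Bivariate.swap (form M) = form M.transpose := by
    simp only [form, map_add, map_mul, Bivariate.swap_X, Bivariate.swap_Y, Bivariate.swap_C_C,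
      Matrix.transpose_apply]
    ring
  rw [← coeff_form, ← coeff_form, ← swap_form, ← map_pow, coeff_coeff_bivariateSwap]

lemma trace_symPow_eq_sum (M : Matrix (Fin 2) (Fin 2) R) (n : ℕ) :
    (symPow M n).trace = ∑ i ∈ range (n + 1), (symPowRow M n i).coeff i := by
  simp [Matrix.trace, symPow, sum_range]

/-- The sum of the entries `(i, i - 1)` of `symPow M n`. Together with the trace it satisfies a
two-term linear recurrence in `n`. -/
noncomputable def symPowSubtrace (M : Matrix (Fin 2) (Fin 2) R) (n : ℕ) : R :=
  ∑ i ∈ range (n + 1), (X * symPowRow M n i).coeff i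

lemma trace_symPow_succ (M : Matrix (Fin 2) (Fin 2) R) (n : ℕ) :
    (symPow M (n + 1)).trace =
      M 1 1 * (symPow M n).trace + M 1 0 * symPowSubtrace M n + M 0 0 ^ (n + 1) := by
  have row_succ {i : ℕ} (hi : i ∈ range (n + 1)) : symPowRow M (n + 1) i =
      C (M 1 1) * symPowRow M n i + C (M 1 0) * (X * symPowRow M n i) := by
    rw [symPowRow, Nat.sub_add_comm (mem_range_succ_iff.1 hi), symPowRow]
    ring
  have corner : (symPowRow M (n + 1) (n + 1)).coeff (n + 1) = M 0 0 ^ (n + 1) := by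
    simp [symPowRow, coeff_linear_pow]
  rw [trace_symPow_eq_sum, trace_symPow_eq_sum, sum_range_succ, corner, symPowSubtrace, mul_sum,
    mul_sum, ← sum_add_distrib]
  congr 1
  exact sum_congr rfl fun i hi ↦ by rw [row_succ hi, coeff_add, coeff_C_mul, coeff_C_mul]

lemma symPowSubtrace_succ (M : Matrix (Fin 2) (Fin 2) R) (n : ℕ) :
    symPowSubtrace M (n + 1) = M 0 0 * symPowSubtrace M n + M 0 1 * (symPow M n).trace := by
  have row_succ (i : ℕ) : symPowRow M (n + 1) (i + 1) =
      C (M 0 0) * (X * symPowRow M n i) + C (M 0 1) * symPowRow M n i := by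
    rw [symPowRow, symPowRow, Nat.add_sub_add_right]
    ring
  rw [symPowSubtrace, sum_range_succ', symPowSubtrace, trace_symPow_eq_sum, mul_sum, mul_sum,
    ← sum_add_distrib]
  simp only [mul_coeff_zero, coeff_X_zero, zero_mul, add_zero, coeff_X_mul, row_succ, coeff_add,
    coeff_C_mul]

lemma trace_symPow_zero (M : Matrix (Fin 2) (Fin 2) R) : (symPow M 0).trace = 1 := by
  simp [trace_symPow_eq_sum, symPowRow]

lemma trace_symPow_one (M : Matrix (Fin 2) (Fin 2) R) : (symPow M 1).trace = M.trace := by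
  simp [trace_symPow_eq_sum, symPowRow, sum_range_succ, Matrix.trace_fin_two, add_comm]

lemma trace_symPow_add_two (M : Matrix (Fin 2) (Fin 2) R) (n : ℕ) :
    (symPow M (n + 2)).trace =
      M.trace * (symPow M (n + 1)).trace - M.det * (symPow M n).trace := by
  rw [trace_symPow_succ M (n + 1), symPowSubtrace_succ, trace_symPow_succ, Matrix.trace_fin_two,
    Matrix.det_fin_two]
  ring

theorem trace_symPow_eq_chebyshev {M : Matrix (Fin 2) (Fin 2) R} (hM : M.det = 1) (n : ℕ) :
    (symPow M n).trace = (Chebyshev.S R n).eval M.trace := by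
  induction n using Nat.twoStepInduction with
  | zero => simp [trace_symPow_zero]
  | one => simp [trace_symPow_one]
  | more n h₀ h₁ =>
    rw [trace_symPow_add_two, h₀, h₁, hM]
    simp [Chebyshev.S_add_two]

end SymmetricPower

section Nonneg

variable {R : Type*} [CommRing R] [LinearOrder R] [IsStrictOrderedRing R]

lemma symPow_mul_symPow_transpose_nonneg (M : Matrix (Fin 2) (Fin 2) R) (n : ℕ)
    (i j : Fin (n + 1)) : 0 ≤ symPow M n i j * symPow M.transpose n j i := by
  have choose_pos (i : Fin (n + 1)) : (0 : R) < n.choose i :=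
    mod_cast Nat.choose_pos (Nat.le_of_lt_succ i.2)
  refine nonneg_of_mul_nonneg_right (a := (n.choose j : R)) ?_ (choose_pos j)
  calc (0 : R) ≤ n.choose i * symPow M n i j ^ 2 := by have := choose_pos i; positivity
    _ = n.choose j * (symPow M n i j * symPow M.transpose n j i) := by
      linear_combination -symPow M n i j * choose_mul_symPow_transpose M n j i

open scoped Matrix in
theorem coeff_trace_symPow_conj_nonneg (M : Matrix (Fin 2) (Fin 2) R) (n : ℕ) (k : ℤ) :
    0 ≤ (symPow (.diagonal ![T (-1), 1] * M.map LaurentPolynomial.C * .diagonal ![T 1, 1] *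
      (M.map LaurentPolynomial.C)ᵀ) n : Matrix _ _ R[T;T⁻¹]).trace.coeff k := by
  rw [← Matrix.transpose_map, symPow_mul, symPow_mul, symPow_mul, symPow_map, symPow_map,
    symPow_diagonal, symPow_diagonal, Matrix.trace, AddMonoidAlgebra.coeff_sum,
    Finsupp.finsetSum_apply]
  refine sum_nonneg fun i _ ↦ ?_
  rw [Matrix.diag_apply, Matrix.mul_apply, AddMonoidAlgebra.coeff_sum, Finsupp.finsetSum_apply]
  refine sum_nonneg fun j _ ↦ ?_
  have monomial_eq : (T (-1) ^ (i : ℕ) * LaurentPolynomial.C (symPow M n i j) * T 1 ^ (j : ℕ) *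
      LaurentPolynomial.C (symPow Mᵀ n j i) : R[T;T⁻¹]) =
      .single (j - i : ℤ) (symPow M n i j * symPow Mᵀ n j i) := by
    rw [single_eq_C_mul_T, T_sub, T_pow, T_pow, map_mul, mul_neg, mul_one, mul_one]
    ring
  rw [Matrix.mul_diagonal, Matrix.diagonal_mul, Matrix.map_apply, Matrix.map_apply, monomial_eq,
    AddMonoidAlgebra.coeff_single, Finsupp.single_apply]
  split_ifs
  exacts [symPow_mul_symPow_transpose_nonneg M n i j, le_rfl]

end Nonneg

section ZonalCoeff

variable {R : Type*} [CommRing R]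

/-- The Laurent polynomial `2 * (1 - x) + x * (T + T⁻¹)`, that is `2 * (1 - x + x * cos φ)` for
`T = exp (i φ)`. -/
noncomputable def zonalArg (x : R) : R[T;T⁻¹] :=
  LaurentPolynomial.C (2 * (1 - x)) + LaurentPolynomial.C x * (T 1 + T (-1))

/-- The `k`-th Fourier coefficient of `φ ↦ p (2 * (1 - x + x * cos φ))`. -/
noncomputable def zonalCoeff (p : R[X]) (k : ℤ) (x : R) : R :=
  (aeval (zonalArg x) p).coeff k

lemma zonalCoeff_zero (k : ℤ) (x : R) : zonalCoeff 0 k x = 0 := by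
  simp [zonalCoeff]

lemma zonalCoeff_add (p q : R[X]) (k : ℤ) (x : R) :
    zonalCoeff (p + q) k x = zonalCoeff p k x + zonalCoeff q k x := by
  simp [zonalCoeff]

lemma zonalCoeff_sub (p q : R[X]) (k : ℤ) (x : R) :
    zonalCoeff (p - q) k x = zonalCoeff p k x - zonalCoeff q k x := by
  simp [zonalCoeff]

lemma zonalCoeff_C (a : R) (k : ℤ) (x : R) :
    zonalCoeff (C a) k x = if k = 0 then a else 0 := by
  simp [zonalCoeff, ← LaurentPolynomial.C_eq_algebraMap]

lemma zonalCoeff_mul_X (p : R[X]) (k : ℤ) (x : R) :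
    zonalCoeff (p * X) k x =
      2 * (1 - x) * zonalCoeff p k x + x * (zonalCoeff p (k - 1) x + zonalCoeff p (k + 1) x) := by
  have expand (f : R[T;T⁻¹]) : f * zonalArg x =
      AddMonoidAlgebra.single 0 (2 * (1 - x)) * f +
        (AddMonoidAlgebra.single 1 x * f + AddMonoidAlgebra.single (-1) x * f) := by
    rw [zonalArg, single_eq_C, single_eq_C_mul_T, single_eq_C_mul_T]
    ring
  simp only [zonalCoeff, map_mul, aeval_X, expand, AddMonoidAlgebra.coeff_add, Finsupp.add_apply,
    AddMonoidAlgebra.coeff_single_mul_apply]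
  rw [neg_zero, zero_add, neg_neg, neg_add_eq_sub, add_comm 1 k, mul_add]

-- Both sides are derivations in `p`; at `p = X` this reads `T ∂_T (T + T⁻¹) = T - T⁻¹`.
lemma intCast_mul_zonalCoeff (p : R[X]) (k : ℤ) (x : R) :
    k * zonalCoeff p k x =
      x * (zonalCoeff (derivative p) (k - 1) x - zonalCoeff (derivative p) (k + 1) x) := by
  induction p using Polynomial.induction_on generalizing k with
  | C a =>
    rw [zonalCoeff_C, derivative_C, zonalCoeff_zero, zonalCoeff_zero]
    split_ifs with hk <;> simp [hk]
  | add p q hp hq =>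
    simp only [zonalCoeff_add, derivative_add]
    linear_combination hp k + hq k
  | monomial n a ih =>
    rw [pow_succ, ← mul_assoc]
    generalize C a * X ^ n = q at ih ⊢
    have ih_pred := ih (k - 1)
    have ih_succ := ih (k + 1)
    push_cast at ih_pred ih_succ
    simp only [derivative_mul, derivative_X, mul_one, zonalCoeff_add, zonalCoeff_mul_X,
      sub_add_cancel, add_sub_cancel_right] at ih_pred ih_succ ⊢
    linear_combination 2 * (1 - x) * ih k + x * (ih_pred + ih_succ)

variable {𝕜 : Type*} [NontriviallyNormedField 𝕜]

lemma hasDerivAt_zonalCoeff (p : 𝕜[X]) (k : ℤ) (x : 𝕜) :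
    HasDerivAt (zonalCoeff p k)
      (zonalCoeff (derivative p) (k - 1) x - 2 * zonalCoeff (derivative p) k x +
        zonalCoeff (derivative p) (k + 1) x) x := by
  induction p using Polynomial.induction_on generalizing k with
  | C a =>
    rw [show zonalCoeff (C a) k = fun _ ↦ if k = 0 then a else 0 from funext (zonalCoeff_C a k)]
    simpa [zonalCoeff_zero] using hasDerivAt_const x (if k = 0 then a else 0)
  | add p q hp hq =>
    rw [show zonalCoeff (p + q) k = zonalCoeff p k + zonalCoeff q k from
      funext (zonalCoeff_add p q k)]
    refine ((hp k).add (hq k)).congr_deriv ?_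
    simp only [derivative_add, zonalCoeff_add]
    ring
  | monomial n a ih =>
    rw [pow_succ, ← mul_assoc]
    generalize C a * X ^ n = q at ih ⊢
    have hasDerivAt_center : HasDerivAt (fun y : 𝕜 ↦ 2 * (1 - y)) (-2) x := by
      simpa using ((hasDerivAt_id x).const_sub 1).const_mul 2
    rw [show zonalCoeff (q * X) k = _ from funext (zonalCoeff_mul_X q k)]
    refine ((hasDerivAt_center.mul (ih k)).add
      ((hasDerivAt_id x).mul ((ih (k - 1)).add (ih (k + 1))))).congr_deriv ?_
    simp only [derivative_mul, derivative_X, mul_one, zonalCoeff_add, zonalCoeff_mul_X,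
      sub_add_cancel, add_sub_cancel_right, Pi.add_apply, id]
    ring

theorem mul_deriv_zonalCoeff_add (p : 𝕜[X]) (k : ℤ) (x : 𝕜) :
    x * (deriv (zonalCoeff p k) x + deriv (zonalCoeff p (k + 1)) x) =
      k * zonalCoeff p k x - (k + 1) * zonalCoeff p (k + 1) x := by
  have euler_succ := intCast_mul_zonalCoeff p (k + 1) x
  push_cast at euler_succ
  rw [(hasDerivAt_zonalCoeff p k x).deriv, (hasDerivAt_zonalCoeff p (k + 1) x).deriv,
    intCast_mul_zonalCoeff, euler_succ, add_sub_cancel_right]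
  ring

end ZonalCoeff

section Chebyshev

variable {R : Type*} [CommRing R]

lemma zonalCoeff_S_add_two (n : ℕ) (k : ℤ) (x : R) :
    zonalCoeff (Chebyshev.S R (n + 2 : ℕ)) k x =
      2 * (1 - x) * zonalCoeff (Chebyshev.S R (n + 1 : ℕ)) k x +
        x * (zonalCoeff (Chebyshev.S R (n + 1 : ℕ)) (k - 1) x +
          zonalCoeff (Chebyshev.S R (n + 1 : ℕ)) (k + 1) x) -
        zonalCoeff (Chebyshev.S R n) k x := by
  push_cast
  rw [Chebyshev.S_add_two, mul_comm, zonalCoeff_sub, zonalCoeff_mul_X]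

lemma zonalCoeff_S_zero (k : ℤ) (x : R) :
    zonalCoeff (Chebyshev.S R (0 : ℕ)) k x = if k = 0 then 1 else 0 := by
  simpa using zonalCoeff_C 1 k x

lemma zonalCoeff_S_one (k : ℤ) (x : R) :
    zonalCoeff (Chebyshev.S R (1 : ℕ)) k x =
      2 * (1 - x) * (if k = 0 then 1 else 0) +
        x * ((if k = 1 then 1 else 0) + if k = -1 then 1 else 0) := by
  rw [Nat.cast_one, Chebyshev.S_one, ← one_mul X, ← C_1, zonalCoeff_mul_X]
  simp only [zonalCoeff_C, sub_eq_zero, add_eq_zero_iff_eq_neg]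

lemma zonalCoeff_S_eq_zero {n : ℕ} {k : ℤ} (hk : n < k) (x : R) :
    zonalCoeff (Chebyshev.S R n) k x = 0 := by
  induction n using Nat.twoStepInduction generalizing k with
  | zero =>
    rw [zonalCoeff_S_zero, if_neg (by lia)]
  | one =>
    rw [zonalCoeff_S_one, if_neg (by lia), if_neg (by lia), if_neg (by lia)]
    ring
  | more n h₀ h₁ =>
    rw [zonalCoeff_S_add_two, h₁ (by lia), h₁ (by lia), h₁ (by lia), h₀ (by lia)]
    ring

lemma zonalCoeff_S_add_succ_at_one (n : ℕ) (k : ℤ) :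
    zonalCoeff (Chebyshev.S R n) k 1 + zonalCoeff (Chebyshev.S R n) (k + 1) 1 =
      if -(n : ℤ) - 1 ≤ k ∧ k ≤ n then 1 else 0 := by
  induction n using Nat.twoStepInduction generalizing k with
  | zero =>
    simp only [zonalCoeff_S_zero]
    split_ifs <;> first | lia | simp
  | one =>
    simp only [zonalCoeff_S_one]
    split_ifs <;> first | lia | simp
  | more n h₀ h₁ =>
    have recurrence : zonalCoeff (Chebyshev.S R (n + 2 : ℕ)) k 1 +
          zonalCoeff (Chebyshev.S R (n + 2 : ℕ)) (k + 1) 1 =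
        (zonalCoeff (Chebyshev.S R (n + 1 : ℕ)) (k - 1) 1 +
            zonalCoeff (Chebyshev.S R (n + 1 : ℕ)) (k - 1 + 1) 1) +
          (zonalCoeff (Chebyshev.S R (n + 1 : ℕ)) (k + 1) 1 +
            zonalCoeff (Chebyshev.S R (n + 1 : ℕ)) (k + 1 + 1) 1) -
        (zonalCoeff (Chebyshev.S R n) k 1 + zonalCoeff (Chebyshev.S R n) (k + 1) 1) := by
      rw [zonalCoeff_S_add_two, zonalCoeff_S_add_two, sub_add_cancel, add_sub_cancel_right]
      ring
    rw [recurrence, h₁, h₁, h₀]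
    split_ifs <;> first | lia | simp

end Chebyshev

open scoped Matrix in
theorem zonalCoeff_S_nonneg {x : ℝ} (hx₀ : 0 ≤ x) (hx₁ : x ≤ 1) (n : ℕ) (k : ℤ) :
    0 ≤ zonalCoeff (Chebyshev.S ℝ n) k x := by
  let c := √(1 - x)
  let s := √x
  have hc : c ^ 2 = 1 - x := Real.sq_sqrt (sub_nonneg.2 hx₁)
  have hs : s ^ 2 = x := Real.sq_sqrt hx₀
  let rotation : Matrix (Fin 2) (Fin 2) ℝ := !![c, s; -s, c]
  let M : Matrix (Fin 2) (Fin 2) ℝ[T;T⁻¹] := .diagonal ![T (-1), 1] *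
    rotation.map LaurentPolynomial.C * .diagonal ![T 1, 1] * (rotation.map LaurentPolynomial.C)ᵀ
  have T_mul_T : (T (-1) * T 1 : ℝ[T;T⁻¹]) = 1 := by rw [← T_add, neg_add_cancel, T_zero]
  have det_M : M.det = 1 := by
    have det_rotation : (rotation.map LaurentPolynomial.C).det = 1 := by
      rw [← RingHom.mapMatrix_apply, ← RingHom.map_det, Matrix.det_fin_two_of,
        show c * c - s * -s = 1 by linear_combination hc + hs, map_one]
    simp [M, Matrix.det_mul, det_rotation, T_mul_T]
  have trace_M : M.trace = zonalArg x := by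
    have trace_eq : M.trace =
        2 * LaurentPolynomial.C c ^ 2 + LaurentPolynomial.C s ^ 2 * (T 1 + T (-1)) := by
      simp [M, rotation, Matrix.trace_fin_two, Matrix.mul_apply, Fin.sum_univ_two]
      ring
    rw [trace_eq, ← map_pow, ← map_pow, hc, hs, zonalArg, map_mul, map_ofNat]
  have h := coeff_trace_symPow_conj_nonneg rotation n k
  rwa [trace_symPow_eq_chebyshev det_M, trace_M, ← Chebyshev.aeval_S (R := ℝ)] at h

/-- The explicit solution `∑_{j=k}^n (Λ_j + Λ_{j+1}) (e⁻ᵗ)` of the de Branges system of index `n`,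
where `Λ_j (x)` is the `j`-th Fourier coefficient of `S_n (2 * (1 - x + x * cos φ))`. -/
noncomputable def deBrangesFun (n k : ℕ) (t : ℝ) : ℝ :=
  ∑ j ∈ Ico k (n + 1), (zonalCoeff (Chebyshev.S ℝ n) j (Real.exp (-t)) +
    zonalCoeff (Chebyshev.S ℝ n) (j + 1) (Real.exp (-t)))

lemma hasDerivAt_zonalCoeff_exp_neg_add (p : ℝ[X]) (k : ℤ) (t : ℝ) :
    HasDerivAt
      (fun t ↦ zonalCoeff p k (Real.exp (-t)) + zonalCoeff p (k + 1) (Real.exp (-t)))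
      ((k + 1) * zonalCoeff p (k + 1) (Real.exp (-t)) - k * zonalCoeff p k (Real.exp (-t))) t := by
  have hasDerivAt_exp_neg : HasDerivAt (fun t ↦ Real.exp (-t)) (-Real.exp (-t)) t := by
    simpa using (hasDerivAt_neg t).exp
  have chain (j : ℤ) := (hasDerivAt_zonalCoeff p j
    (Real.exp (-t))).differentiableAt.hasDerivAt.comp t hasDerivAt_exp_neg
  refine ((chain k).add (chain (k + 1))).congr_deriv ?_
  linear_combination -mul_deriv_zonalCoeff_add p k (Real.exp (-t))

lemma hasDerivAt_deBrangesFun {n k : ℕ} (hk : k ≤ n + 1) (t : ℝ) :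
    HasDerivAt (deBrangesFun n k) (-k * zonalCoeff (Chebyshev.S ℝ n) k (Real.exp (-t))) t := by
  refine (HasDerivAt.fun_sum fun (j : ℕ) _ ↦
    hasDerivAt_zonalCoeff_exp_neg_add (Chebyshev.S ℝ n) j t).congr_deriv ?_
  have telescope := sum_Ico_sub
    (fun j : ℕ ↦ (j : ℝ) * zonalCoeff (Chebyshev.S ℝ n) j (Real.exp (-t))) hk
  rw [zonalCoeff_S_eq_zero (by lia), mul_zero, zero_sub] at telescope
  simpa using telescope

lemma deBrangesFun_apply_zero {n k : ℕ} (hk : k ≤ n + 1) : deBrangesFun n k 0 = n + 1 - k := by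
  have summand_eq_one {j : ℕ} (hj : j ∈ Ico k (n + 1)) :
      zonalCoeff (Chebyshev.S ℝ n) j (Real.exp (-0)) +
        zonalCoeff (Chebyshev.S ℝ n) (j + 1) (Real.exp (-0)) = 1 := by
    have := (mem_Ico.1 hj).2
    rw [neg_zero, Real.exp_zero, zonalCoeff_S_add_succ_at_one, if_pos (by lia)]
  rw [deBrangesFun, sum_congr rfl fun j hj ↦ summand_eq_one hj]
  simp [Nat.cast_sub hk]

lemma deBrangesFun_eq_add_succ {n k : ℕ} (hk : k ≤ n) (t : ℝ) :
    deBrangesFun n k t = (zonalCoeff (Chebyshev.S ℝ n) k (Real.exp (-t)) +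
      zonalCoeff (Chebyshev.S ℝ n) (k + 1) (Real.exp (-t))) + deBrangesFun n (k + 1) t :=
  sum_eq_sum_Ico_succ_bot (Nat.lt_succ_of_le hk) _

theorem isDeBrangesSystem_deBrangesFun (n : ℕ) : IsDeBrangesSystem n (deBrangesFun n) where
  differentiable k _ hk t := (hasDerivAt_deBrangesFun hk t).differentiableAt
  top_eq_zero t := by simp [deBrangesFun]
  initial k _ hk := deBrangesFun_apply_zero hk
  system k hk₁ hk t := by
    rw [deBrangesFun_eq_add_succ hk, (hasDerivAt_deBrangesFun (by lia) t).deriv,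
      (hasDerivAt_deBrangesFun (by lia) t).deriv]
    have : (k : ℝ) ≠ 0 := by positivity
    push_cast
    field_simp
    ring

theorem deBrangesFun_nonneg (n k : ℕ) {t : ℝ} (ht : 0 ≤ t) : 0 ≤ deBrangesFun n k t := by
  have nonneg (j : ℤ) : 0 ≤ zonalCoeff (Chebyshev.S ℝ n) j (Real.exp (-t)) :=
    zonalCoeff_S_nonneg (Real.exp_nonneg _) (Real.exp_le_one_iff.2 (neg_nonpos.2 ht)) n j
  exact sum_nonneg fun j _ ↦ add_nonneg (nonneg j) (nonneg (j + 1))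

namespace IsDeBrangesSystem

variable {n : ℕ} {τ σ : ℕ → ℝ → ℝ}

lemma hasDerivAt (hτ : IsDeBrangesSystem n τ) {k : ℕ} (hk₁ : 1 ≤ k) (hk : k ≤ n) (t : ℝ) :
    HasDerivAt (τ k) (k * (τ (k + 1) t - deriv (τ (k + 1)) t / (k + 1) - τ k t)) t := by
  refine (hτ.differentiable k hk₁ (by lia) t).hasDerivAt.congr_deriv ?_
  have : (k : ℝ) ≠ 0 := by positivity
  have system := hτ.system k hk₁ hk t
  field_simp at system ⊢
  linear_combination -system

theorem unique (hτ : IsDeBrangesSystem n τ) (hσ : IsDeBrangesSystem n σ) {k : ℕ} (hk₁ : 1 ≤ k)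
    (hk : k ≤ n + 1) : τ k = σ k := by
  induction hk using Nat.decreasingInduction with
  | self => exact funext fun t ↦ (hτ.top_eq_zero t).trans (hσ.top_eq_zero t).symm
  | of_succ k hk_lt ih =>
    have hk_le := Nat.le_of_lt_succ hk_lt
    have succ_eq := ih (by lia)
    have lipschitz (t : ℝ) : LipschitzOnWith k
        (fun y ↦ k * (τ (k + 1) t - deriv (τ (k + 1)) t / (k + 1) - y)) Set.univ := by
      refine LipschitzOnWith.of_dist_le_mul fun y _ z _ ↦ ?_
      simp [Real.dist_eq, ← mul_sub, abs_mul, abs_sub_comm]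
    refine ODE_solution_unique_univ (t₀ := 0) lipschitz
      (fun t ↦ ⟨hτ.hasDerivAt hk₁ hk_le t, trivial⟩) (fun t ↦ ⟨?_, trivial⟩) ?_
    · rw [succ_eq]
      exact hσ.hasDerivAt hk₁ hk_le t
    · rw [hτ.initial k hk₁ (by lia), hσ.initial k hk₁ (by lia)]

end IsDeBrangesSystem

/-- de Branges' inequality: the de Branges functions are nonnegative on `[0, ∞)`. -/
theorem deBranges_nonneg (n : ℕ) (hn : 1 ≤ n) (τ : ℕ → ℝ → ℝ)
    (hτ : IsDeBrangesSystem n τ) :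
    ∀ k : ℕ, 1 ≤ k → k ≤ n + 1 → ∀ t : ℝ, 0 ≤ t → 0 ≤ τ k t := by
  intro k hk₁ hk t ht
  rw [hτ.unique (isDeBrangesSystem_deBrangesFun n) hk₁ hk]
  exact deBrangesFun_nonneg n k ht
end
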